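/- arXiv:0712.2631 — 3 statements merged into one kernel-verified Lean document; each statement's English description precedes it below -/
import Mathlib

section
/- Let K ⊂ ℝ^{2n} be a convex body with 0 in its interior and smooth boundary, and let γ be a capacity carrier of K with period T₀. Then 4π·c(K) ≤ (∫₀^{T₀} |γ̇(t)| dt)², where |·| is the Euclidean norm. -/
open MeasureTheory Real Set Filter intervalIntegral Metric
open scoped InnerProductSpace Topology Pointwise

noncomputable section

/-- The phase space `ℝ^{2n}`. -/
abbrev E (n : ℕ) := EuclideanSpace ℝ (Fin (2 * n))

/-- The standard complex structure `J` on `ℝ^{2n}`, given in coordinates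
`(x₁,y₁,…,xₙ,yₙ)` by `J(x₁,y₁,…,xₙ,yₙ) = (−y₁,x₁,…,−yₙ,xₙ)`. -/
def Jmap (n : ℕ) (v : E n) : E n := WithLp.toLp 2 fun i =>
  if _h : i.val % 2 = 0 then -v ⟨i.val + 1, by have := i.isLt; omega⟩
  else v ⟨i.val - 1, by have := i.isLt; omega⟩

/-- The support function `h_K(u) = sup_{x ∈ K} ⟨x, u⟩`. -/
def suppFn (n : ℕ) (K : Set (E n)) (u : E n) : ℝ :=
  sSup ((fun x => ⟪x, u⟫_ℝ) '' K)

/-- A convex body: a compact convex set with nonempty interior. -/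
def IsConvexBody (n : ℕ) (K : Set (E n)) : Prop :=
  IsCompact K ∧ Convex ℝ K ∧ (interior K).Nonempty

/-- Membership in the loop space `𝓔_p`: the pair `(z, dz)` represents an absolutely
continuous `2π`-periodic loop `z` with derivative `dz ∈ L^p([0,2π])`, mean zero and
normalized action `(1/2)∫₀^{2π} ⟨J z, ż⟩ = 1`. -/
def InE (n : ℕ) (p : ℝ) (z dz : ℝ → E n) : Prop :=
  Function.Periodic z (2 * π) ∧
  (∀ a b : ℝ, IntervalIntegrable dz volume a b) ∧
  (∀ t, z t = z 0 + ∫ s in (0:ℝ)..t, dz s) ∧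
  MemLp dz (ENNReal.ofReal p) (volume.restrict (Set.Ioc (0:ℝ) (2 * π))) ∧
  (∫ t in (0:ℝ)..(2 * π), z t) = 0 ∧
  (1 / 2) * ∫ t in (0:ℝ)..(2 * π), ⟪Jmap n (z t), dz t⟫_ℝ = 1

/-- The (Ekeland–Hofer–Zehnder) capacity of a convex body,
`c(S) = (π · inf_{z ∈ 𝓔₂} (1/2π) ∫₀^{2π} h_S(ż(t)) dt)²`. -/
def capacity (n : ℕ) (S : Set (E n)) : ℝ :=
  (π * sInf { r : ℝ | ∃ z dz : ℝ → E n, InE n 2 z dz ∧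
      r = (1 / (2 * π)) * ∫ t in (0:ℝ)..(2 * π), suppFn n S (dz t) }) ^ 2

/-- The action `𝒜(γ) = (1/2) ∫₀^{T₀} ⟨−Jγ̇(t), γ(t)⟩ dt` of a `T₀`-periodic curve. -/
def action (n : ℕ) (γ : ℝ → E n) (T₀ : ℝ) : ℝ :=
  (1 / 2) * ∫ t in (0:ℝ)..T₀, ⟪-Jmap n (deriv γ t), γ t⟫_ℝ

/-- A closed characteristic on `∂K`: a nonconstant `T₀`-periodic `C¹` curve lying on
`∂K` satisfying `γ̇ = d·J∇F(γ)` for some `d > 0`, where `F = ‖·‖_K²`. -/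
def IsClosedCharacteristic (n : ℕ) (K : Set (E n)) (γ : ℝ → E n) (T₀ : ℝ) : Prop :=
  0 < T₀ ∧ Function.Periodic γ T₀ ∧ ContDiff ℝ 1 γ ∧ (∃ s t, γ s ≠ γ t) ∧
  (∀ t, γ t ∈ frontier K) ∧
  ∃ d : ℝ, 0 < d ∧ ∀ t, deriv γ t = d • Jmap n (gradient (fun x => gauge K x ^ 2) (γ t))

/-- A capacity carrier of `K`: a closed characteristic on `∂K` of minimal action. -/
def IsCapacityCarrier (n : ℕ) (K : Set (E n)) (γ : ℝ → E n) (T₀ : ℝ) : Prop :=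
  IsClosedCharacteristic n K γ T₀ ∧
  ∀ γ' T₀', IsClosedCharacteristic n K γ' T₀' → action n γ T₀ ≤ action n γ' T₀'

/-- The minimal action of a closed characteristic on `∂K`. -/
def minAction (n : ℕ) (K : Set (E n)) : ℝ :=
  sInf { a : ℝ | ∃ γ T₀, IsClosedCharacteristic n K γ T₀ ∧ a = action n γ T₀ }

/-- `K` has smooth boundary: its gauge function is `C¹` away from the origin. -/
def HasSmoothBoundary (n : ℕ) (K : Set (E n)) : Prop :=
  ContDiffOn ℝ 1 (gauge K) {(0 : E n)}ᶜ

/-- The `p`-sum `K +ₚ T` of Firey: the convex body with support function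
`(h_K^p + h_T^p)^{1/p}`. -/
def pSum (n : ℕ) (p : ℝ) (K T : Set (E n)) : Set (E n) :=
  { x | ∀ u, ⟪x, u⟫_ℝ ≤ (suppFn n K u ^ p + suppFn n T u ^ p) ^ (1 / p) }

/-- The polar body `T° = {x : ⟨x,y⟩ ≤ 1 for all y ∈ T}`. -/
def polarBody (n : ℕ) (T : Set (E n)) : Set (E n) :=
  { x | ∀ y ∈ T, ⟪x, y⟫_ℝ ≤ 1 }

/-- The length `∫₀^{T₀} ‖γ̇(t)‖_B dt` of a curve measured with the gauge of `B`. -/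
def lengthIn (n : ℕ) (B : Set (E n)) (γ : ℝ → E n) (T₀ : ℝ) : ℝ :=
  ∫ t in (0:ℝ)..T₀, gauge B (deriv γ t)

/-- Critical point of the functional `I_p(z) = ∫₀^{2π} h_K^p(ż(t)) dt` on `𝓔_p`. -/
def IsCriticalPoint (n : ℕ) (p : ℝ) (K : Set (E n)) (z dz : ℝ → E n) : Prop :=
  ∀ ξ dξ : ℝ → E n,
    Function.Periodic ξ (2 * π) →
    (∀ a b : ℝ, IntervalIntegrable dξ volume a b) →
    (∀ t, ξ t = ξ 0 + ∫ s in (0:ℝ)..t, dξ s) →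
    MemLp dξ (ENNReal.ofReal p) (volume.restrict (Set.Ioc (0:ℝ) (2 * π))) →
    (∫ t in (0:ℝ)..(2 * π), ξ t) = 0 →
    (∫ t in (0:ℝ)..(2 * π), ⟪ξ t, Jmap n (dz t)⟫_ℝ) = 0 →
    (∫ t in (0:ℝ)..(2 * π), ⟪gradient (fun u => suppFn n K u ^ p) (dz t), dξ t⟫_ℝ) = 0

/-- The rotation-invariant probability measure on the unit sphere of `ℝ^{2n}`. -/
def sphereMeasure (n : ℕ) : Measure (sphere (0 : E n) 1) :=
  ((volume : Measure (E n)).toSphere Set.univ)⁻¹ • (volume : Measure (E n)).toSphere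

/-- The mean width parameter `M*(K) = ∫_{S^{2n-1}} h_K dσ`. -/
def meanWidth (n : ℕ) (K : Set (E n)) : ℝ :=
  ∫ x : sphere (0 : E n) 1, suppFn n K (x : E n) ∂(sphereMeasure n)


def Jswap (n : ℕ) : Fin (2*n) → Fin (2*n) := fun i =>
  if _h : i.val % 2 = 0 then ⟨i.val + 1, by have := i.isLt; omega⟩
  else ⟨i.val - 1, by have := i.isLt; omega⟩

theorem Jswap_invol (n : ℕ) : Function.Involutive (Jswap n) := by
  intro i
  unfold Jswap
  ext
  by_cases h : i.val % 2 = 0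
  · have : (i.val+1) % 2 ≠ 0 := by omega
    simp [h, this]
  · have h2 : (i.val-1) % 2 = 0 := by omega
    simp [h, h2]; omega

def Jl (n : ℕ) : E n →L[ℝ] E n := LinearMap.toContinuousLinearMap
  { toFun := Jmap n
    map_add' := by
      intro x y; ext i; simp only [Jmap, PiLp.add_apply]; split_ifs <;> simp; ring
    map_smul' := by
      intro x y; ext i; simp only [Jmap, PiLp.smul_apply]; split_ifs <;> simp }

theorem Jl_apply (n : ℕ) (v : E n) : Jmap n v = Jl n v := rfl

theorem Jl_inner (n : ℕ) (u v : E n) : ⟪Jl n u, Jl n v⟫_ℝ = ⟪u, v⟫_ℝ := by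
  simp only [PiLp.inner_apply]
  rw [← Equiv.sum_comp (Jswap_invol n).toPerm (fun i => ⟪u i, v i⟫_ℝ)]
  refine Finset.sum_congr rfl fun i _ => ?_
  rw [← Jl_apply, ← Jl_apply]
  simp only [Jmap, Function.Involutive.coe_toPerm, Jswap]
  split_ifs <;> simp

theorem Jl_sq (n : ℕ) (u : E n) : Jl n (Jl n u) = -u := by
  rw [← Jl_apply, ← Jl_apply]
  ext i
  by_cases h : i.val % 2 = 0
  · have : (i.val+1) % 2 ≠ 0 := by omega
    simp [Jmap, h, this]
  · have h2 : (i.val-1) % 2 = 0 := by omega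
    have h3 : i.val - 1 + 1 = i.val := by omega
    simp [Jmap, h, h2, h3]

theorem Jl_norm (n : ℕ) (u : E n) : ‖Jl n u‖ = ‖u‖ := by
  rw [norm_eq_sqrt_real_inner, Jl_inner, ← norm_eq_sqrt_real_inner]

theorem Jl_skew (n : ℕ) (u v : E n) : ⟪Jl n u, v⟫_ℝ = -⟪u, Jl n v⟫_ℝ := by
  rw [← Jl_inner n (Jl n u) v, Jl_sq, inner_neg_left]

theorem wirtinger (f f' : ℝ → ℝ) (hf : ∀ x, HasDerivAt f (f' x) x) (hc : Continuous f')
    (hper : f 0 = f (2 * π)) (hmean : ∫ x in (0:ℝ)..(2 * π), f x = 0) :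
    ∫ x in (0:ℝ)..(2 * π), f x ^ 2 ≤ ∫ x in (0:ℝ)..(2 * π), f' x ^ 2 := by
  have hab : (0:ℝ) < 2 * π := by positivity
  have hfc : Continuous f := continuous_iff_continuousAt.2 fun x => (hf x).continuousAt
  have mem : ∀ g : ℝ → ℝ, Continuous g →
      MemLp (fun x => (g x : ℂ)) 2 (volume.restrict (Ioc 0 (2 * π))) := by
    intro g hg
    have hg' : Continuous (fun x => (g x : ℂ)) := Complex.continuous_ofReal.comp hg
    obtain ⟨C, hC⟩ := (isCompact_Icc (a := (0:ℝ)) (b := 2 * π)).exists_bound_of_continuousOn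
      hg'.continuousOn
    refine MemLp.of_bound hg'.aestronglyMeasurable C ?_
    filter_upwards [ae_restrict_mem measurableSet_Ioc] with x hx
    exact hC x ⟨hx.1.le, hx.2⟩
  have h1 := hasSum_sq_fourierCoeffOn hab (mem f hfc)
  have h2 := hasSum_sq_fourierCoeffOn hab (mem f' hc)
  have key : ∀ i : ℤ, ‖fourierCoeffOn hab (fun x => (f x : ℂ)) i‖ ^ 2 ≤
      ‖fourierCoeffOn hab (fun x => (f' x : ℂ)) i‖ ^ 2 := by
    intro i
    by_cases hi : i = 0
    · subst hi
      have : fourierCoeffOn hab (fun x => (f x : ℂ)) 0 = 0 := by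
        rw [fourierCoeffOn_eq_integral]
        simp [intervalIntegral.integral_ofReal, hmean]
      rw [this]; simp
    · rw [fourierCoeffOn_of_hasDerivAt hab hi (fun x _ => (hf x).ofReal_comp)
        ((Complex.continuous_ofReal.comp hc).intervalIntegrable _ _)]
      rw [← hper]
      have hi1 : (1:ℝ) ≤ |(i:ℝ)| := by exact_mod_cast Int.one_le_abs hi
      have hp := Real.pi_pos
      simp only [sub_self, mul_zero, zero_sub, norm_mul, norm_div, norm_neg, sub_zero]
      gcongr
      simp only [norm_one, Complex.norm_ofNat, Complex.norm_real, Complex.norm_I,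
        Complex.norm_intCast, Complex.ofReal_zero, sub_zero, Complex.ofReal_mul, Complex.ofReal_ofNat, norm_mul, Real.norm_eq_abs, abs_of_pos hp, mul_one]
      set y := ‖fourierCoeffOn hab (fun x => (f' x : ℂ)) i‖
      have hy : 0 ≤ y := norm_nonneg _
      have : 1 / (2 * π * |(i:ℝ)|) * (2 * π * y) = y / |(i:ℝ)| := by field_simp
      rw [this]
      exact div_le_self hy hi1
  have h3 := hasSum_le key h1 h2
  simp only [sub_zero, smul_eq_mul, Complex.norm_real, Real.norm_eq_abs, sq_abs] at h3
  exact le_of_mul_le_mul_left h3 (by positivity)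

theorem wirtinger_vec (n : ℕ) (f f' : ℝ → E n) (hf : ∀ x, HasDerivAt f (f' x) x)
    (hc : Continuous f')
    (hper : f 0 = f (2 * π)) (hmean : ∫ x in (0:ℝ)..(2 * π), f x = 0) :
    ∫ x in (0:ℝ)..(2 * π), ‖f x‖ ^ 2 ≤ ∫ x in (0:ℝ)..(2 * π), ‖f' x‖ ^ 2 := by
  have hfc : Continuous f := continuous_iff_continuousAt.2 fun x => (hf x).continuousAt
  simp only [EuclideanSpace.norm_sq_eq, Real.norm_eq_abs, sq_abs]
  rw [intervalIntegral.integral_finsetSum, intervalIntegral.integral_finsetSum]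
  · refine Finset.sum_le_sum fun i _ => ?_
    refine wirtinger (fun x => f x i) (fun x => f' x i) (fun x => ?_) (by fun_prop)
      (by simp [hper]) ?_
    · exact (EuclideanSpace.proj (𝕜 := ℝ) i).hasFDerivAt.comp_hasDerivAt x (hf x)
    · have := ContinuousLinearMap.intervalIntegral_comp_comm (EuclideanSpace.proj (𝕜 := ℝ) i)
        (hfc.intervalIntegrable (μ := volume) 0 (2 * π))
      rw [hmean] at this
      simpa using this
  · intro i _; exact Continuous.intervalIntegrable (by fun_prop) _ _
  · intro i _; exact Continuous.intervalIntegrable (by fun_prop) _ _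

theorem iso_L2 (n : ℕ) (f f' : ℝ → E n) (hf : ∀ x, HasDerivAt f (f' x) x)
    (hc : Continuous f') (hper : f 0 = f (2 * π)) :
    ∫ x in (0:ℝ)..(2 * π), ⟪Jl n (f x), f' x⟫_ℝ ≤ ∫ x in (0:ℝ)..(2 * π), ‖f' x‖ ^ 2 := by
  have hfc : Continuous f := continuous_iff_continuousAt.2 fun x => (hf x).continuousAt
  have hp : (0:ℝ) < 2 * π := by positivity
  set c : E n := (2 * π)⁻¹ • ∫ x in (0:ℝ)..(2 * π), f x with hcdef
  have hw := wirtinger_vec n (fun x => f x - c) f' (fun x => (hf x).sub_const c) hc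
    (by simp [hper]) (by
      rw [intervalIntegral.integral_sub (hfc.intervalIntegrable _ _) (by simp)]
      rw [intervalIntegral.integral_const, hcdef, smul_smul, sub_zero, mul_inv_cancel₀ hp.ne']
      simp)
  have h0 : ∫ x in (0:ℝ)..(2 * π), ⟪Jl n c, f' x⟫_ℝ = 0 := by
    have : ∀ x, HasDerivAt (fun x => ⟪Jl n c, f x⟫_ℝ) (⟪Jl n c, f' x⟫_ℝ) x := by
      intro x
      simpa using (hasDerivAt_const x (Jl n c)).inner ℝ (hf x)
    rw [intervalIntegral.integral_eq_sub_of_hasDerivAt (fun x _ => this x)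
      (Continuous.intervalIntegrable (by fun_prop) _ _), hper, sub_self]
  have h1 : ∫ x in (0:ℝ)..(2 * π), ⟪Jl n (f x), f' x⟫_ℝ =
      ∫ x in (0:ℝ)..(2 * π), ⟪Jl n (f x - c), f' x⟫_ℝ := by
    simp only [map_sub, inner_sub_left]
    rw [intervalIntegral.integral_sub, h0, sub_zero]
    all_goals exact Continuous.intervalIntegrable (by fun_prop) _ _
  have h2 : ∫ x in (0:ℝ)..(2 * π), ⟪Jl n (f x - c), f' x⟫_ℝ ≤
      ∫ x in (0:ℝ)..(2 * π), (1/2 * ‖f x - c‖ ^ 2 + 1/2 * ‖f' x‖ ^ 2) := by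
    refine intervalIntegral.integral_mono_on hp.le (Continuous.intervalIntegrable (by fun_prop) _ _)
      (Continuous.intervalIntegrable (by fun_prop) _ _) fun x _ => ?_
    have := real_inner_le_norm (Jl n (f x - c)) (f' x)
    rw [Jl_norm] at this
    nlinarith [sq_nonneg (‖f x - c‖ - ‖f' x‖)]
  rw [intervalIntegral.integral_add, intervalIntegral.integral_const_mul,
    intervalIntegral.integral_const_mul] at h2
  · linarith
  all_goals exact Continuous.intervalIntegrable (by fun_prop) _ _

theorem iso (n : ℕ) (f f' : ℝ → E n) (T : ℝ) (hT : 0 < T) (hf : ∀ x, HasDerivAt f (f' x) x)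
    (hc : Continuous f') (hper' : Function.Periodic f' T) (hper : f 0 = f T)
    (hne : ∀ x, f' x ≠ 0) :
    2 * π * ∫ x in (0:ℝ)..T, ⟪Jl n (f x), f' x⟫_ℝ ≤ (∫ x in (0:ℝ)..T, ‖f' x‖) ^ 2 := by
  have hfc : Continuous f := continuous_iff_continuousAt.2 fun x => (hf x).continuousAt
  have hpi : (0:ℝ) < 2 * π := by positivity
  set w : ℝ → ℝ := fun x => ‖f' x‖ with hw
  have hwc : Continuous w := by fun_prop
  have hwpos : ∀ x, 0 < w x := fun x => norm_pos_iff.2 (hne x)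
  have hwper : Function.Periodic w T := fun x => by simp [hw, hper' x]
  set L : ℝ := ∫ x in (0:ℝ)..T, w x with hL
  have hLpos : 0 < L := intervalIntegral.intervalIntegral_pos_of_pos
    (hwc.intervalIntegrable _ _) hwpos hT
  set s : ℝ → ℝ := fun t => ∫ x in (0:ℝ)..t, w x with hs
  have hsd : ∀ t, HasDerivAt s (w t) t := fun t =>
    intervalIntegral.integral_hasDerivAt_right (hwc.intervalIntegrable _ _)
      (hwc.stronglyMeasurableAtFilter _ _) hwc.continuousAt
  have hsc : Continuous s := continuous_iff_continuousAt.2 fun x => (hsd x).continuousAt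
  have hsm : StrictMono s := strictMono_of_hasDerivAt_pos hsd hwpos
  have hsurj : Function.Surjective s := hsc.surjective
    (hwper.tendsto_atTop_intervalIntegral_of_pos' (hwc.intervalIntegrable _ _) hwpos hT)
    (hwper.tendsto_atBot_intervalIntegral_of_pos' (hwc.intervalIntegrable _ _) hwpos hT)
  let e : ℝ ≃o ℝ := hsm.orderIsoOfSurjective s hsurj
  have he : ∀ t, e t = s t := fun t => rfl
  set ρ : ℝ := L / (2 * π) with hρ
  have hρpos : 0 < ρ := by positivity
  set τ : ℝ → ℝ := fun θ => e.symm (ρ * θ) with hτ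
  have hτc : Continuous τ := e.symm.continuous.comp (by fun_prop)
  have hsτ : ∀ θ, s (τ θ) = ρ * θ := fun θ => e.apply_symm_apply _
  have hτd : ∀ θ, HasDerivAt τ (ρ * (w (τ θ))⁻¹) θ := by
    intro θ
    have h1 : HasDerivAt (fun y => e.symm y) (w (τ θ))⁻¹ (ρ * θ) :=
      HasDerivAt.of_local_left_inverse e.symm.continuous.continuousAt (hsd _) (hwpos _).ne'
        (Eventually.of_forall fun y => e.apply_symm_apply y)
    have h2 : HasDerivAt (fun y => ρ * y) ρ θ := by simpa using (hasDerivAt_id θ).const_mul ρ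
    have := h1.comp θ h2
    rwa [mul_comm] at this
  have hτ0 : τ 0 = 0 := by
    apply hsm.injective; rw [hsτ]; simp [hs]
  have hτ1 : τ (2 * π) = T := by
    apply hsm.injective; rw [hsτ, hρ]; field_simp; rfl
  have hτ'c : Continuous (fun θ => ρ * (w (τ θ))⁻¹) :=
    continuous_const.mul ((hwc.comp hτc).inv₀ fun θ => (hwpos _).ne')
  have hmain := iso_L2 n (fun θ => f (τ θ)) (fun θ => (ρ * (w (τ θ))⁻¹) • f' (τ θ))
    (fun θ => (hf (τ θ)).scomp θ (hτd θ)) (hτ'c.smul (hc.comp hτc)) (by simp [hτ0, hτ1, hper])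
  have e1 : ∀ θ, ‖(ρ * (w (τ θ))⁻¹) • f' (τ θ)‖ ^ 2 = ρ ^ 2 := by
    intro θ
    have := hwpos (τ θ)
    rw [norm_smul, Real.norm_eq_abs, abs_of_pos (by positivity)]
    change (ρ * (w (τ θ))⁻¹ * w (τ θ)) ^ 2 = _
    field_simp
  have e2 : ∫ θ in (0:ℝ)..(2 * π), ⟪Jl n (f (τ θ)), (ρ * (w (τ θ))⁻¹) • f' (τ θ)⟫_ℝ =
      ∫ x in (0:ℝ)..T, ⟪Jl n (f x), f' x⟫_ℝ := by
    have := intervalIntegral.integral_comp_mul_deriv (a := 0) (b := 2 * π) (f := τ)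
      (g := fun x => ⟪Jl n (f x), f' x⟫_ℝ) (fun θ _ => hτd θ) hτ'c.continuousOn (by fun_prop)
    rw [hτ0, hτ1] at this
    rw [← this]
    congr 1; ext θ
    rw [inner_smul_right, mul_comm]; rfl
  rw [e2] at hmain
  simp only [e1, intervalIntegral.integral_const, smul_eq_mul, sub_zero] at hmain
  calc _ ≤ 2 * π * (2 * π * ρ ^ 2) := by gcongr
    _ = L ^ 2 := by rw [hρ]; field_simp

theorem grad_facts (n : ℕ) (K : Set (E n))
    (hK : IsConvexBody n K) (h0K : (0 : E n) ∈ interior K) (hKs : HasSmoothBoundary n K)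
    (y : E n) (hy : y ∈ frontier K) :
    ⟪y, gradient (fun x => gauge K x ^ 2) y⟫_ℝ = 2 ∧
    ∀ x ∈ K, ⟪x, gradient (fun x => gauge K x ^ 2) y⟫_ℝ ≤ 2 := by
  have hnhds : K ∈ 𝓝 (0 : E n) := mem_interior_iff_mem_nhds.1 h0K
  have hg1 : gauge K y = 1 := (gauge_eq_one_iff_mem_frontier hK.2.1 hnhds).2 hy
  have hy0 : y ≠ 0 := by rintro rfl; simp at hg1
  have hgd : DifferentiableAt ℝ (gauge K) y :=
    (hKs.contDiffAt (isOpen_compl_singleton.mem_nhds hy0)).differentiableAt (by simp)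
  have hFd : DifferentiableAt ℝ (fun x => gauge K x ^ 2) y := hgd.pow 2
  have hline : ∀ x : E n, HasDerivAt (fun t : ℝ => gauge K (y + t • x) ^ 2)
      (⟪x, gradient (fun x => gauge K x ^ 2) y⟫_ℝ) 0 := by
    intro x
    have h1 := hFd.hasGradientAt.hasFDerivAt
    have h2 : HasDerivAt (fun t : ℝ => y + t • x) x 0 := by
      simpa using ((hasDerivAt_id (0:ℝ)).smul_const x).const_add y
    have h1' : HasFDerivAt (fun x => gauge K x ^ 2)
        (InnerProductSpace.toDual ℝ (E n) (gradient (fun x => gauge K x ^ 2) y))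
        (y + (0:ℝ) • x) := by simpa using h1
    have h3 := h1'.comp_hasDerivAt (0:ℝ) h2
    rw [real_inner_comm]
    exact h3
  have hq : HasDerivAt (fun t : ℝ => (1 + t) ^ 2) 2 0 := by
    have h := ((hasDerivAt_id (0:ℝ)).const_add 1).pow 2
    have e : ((2:ℕ):ℝ) * (1 + id (0:ℝ)) ^ (2 - 1) * 1 = 2 := by norm_num
    rw [e] at h
    exact h
  constructor
  · have hev : (fun t : ℝ => gauge K (y + t • y) ^ 2) =ᶠ[𝓝 0] fun t => (1 + t) ^ 2 := by
      filter_upwards [Ioi_mem_nhds (show (-1:ℝ) < 0 by norm_num)] with t ht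
      have ht' : (0:ℝ) ≤ 1 + t := by have : -1 < t := ht; linarith
      have : y + t • y = (1 + t) • y := by rw [add_smul, one_smul]
      rw [this, gauge_smul_of_nonneg ht', hg1]; simp
    exact (hline y).unique (hq.congr_of_eventuallyEq hev)
  · intro x hx
    have h0 : ∀ t ∈ Ici (0:ℝ), 0 ≤ (1 + t) ^ 2 - gauge K (y + t • x) ^ 2 := by
      intro t ht
      have ht' : (0:ℝ) ≤ t := ht
      have h1 := gauge_add_le hK.2.1 (absorbent_nhds_zero hnhds) y (t • x)
      rw [gauge_smul_of_nonneg ht', hg1, smul_eq_mul] at h1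
      have h2 := gauge_le_one_of_mem hx
      have h3 := gauge_nonneg (s := K) (y + t • x)
      have h4 : gauge K (y + t • x) ≤ 1 + t := by nlinarith
      nlinarith
    have hlim := (hq.sub (hline x)).tendsto_slope_zero_right
    have : 0 ≤ 2 - ⟪x, gradient (fun x => gauge K x ^ 2) y⟫_ℝ := by
      refine ge_of_tendsto hlim ?_
      filter_upwards [self_mem_nhdsWithin] with t ht
      have ht' : (0:ℝ) < t := ht
      have := h0 t ht'.le
      simp [hg1] at this ⊢
      exact mul_nonneg (inv_nonneg.2 ht'.le) (by linarith)
    linarith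

theorem suppFn_eq (n : ℕ) (K : Set (E n))
    (hK : IsConvexBody n K) (h0K : (0 : E n) ∈ interior K) (hKs : HasSmoothBoundary n K)
    (y : E n) (hy : y ∈ frontier K) (κ : ℝ) (hκ : 0 ≤ κ) :
    suppFn n K (κ • gradient (fun x => gauge K x ^ 2) y) = 2 * κ := by
  obtain ⟨h1, h2⟩ := grad_facts n K hK h0K hKs y hy
  refine IsGreatest.csSup_eq ⟨⟨y, hK.1.isClosed.frontier_subset hy, ?_⟩, ?_⟩
  · simp only [inner_smul_right, h1]; ring
  · rintro _ ⟨x, hx, rfl⟩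
    simp only [inner_smul_right]
    nlinarith [h2 x hx]

theorem suppFn_nonneg (n : ℕ) (K : Set (E n)) (hK : IsConvexBody n K)
    (h0K : (0 : E n) ∈ interior K) (u : E n) : 0 ≤ suppFn n K u := by
  refine le_csSup (hK.1.image (by fun_prop)).bddAbove ⟨0, interior_subset h0K, by simp⟩

theorem capacity_le (n : ℕ) (K : Set (E n))
    (hK : IsConvexBody n K) (h0K : (0 : E n) ∈ interior K)
    (z dz : ℝ → E n) (hz : InE n 2 z dz) (A : ℝ) (hA : 0 < A)
    (hh : ∀ t, suppFn n K (dz t) = √A / π) : capacity n K ≤ A := by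
  have hb : ∀ r ∈ { r : ℝ | ∃ z dz : ℝ → E n, InE n 2 z dz ∧
      r = (1 / (2 * π)) * ∫ t in (0:ℝ)..(2 * π), suppFn n K (dz t) }, 0 ≤ r := by
    rintro r ⟨z, dz, -, rfl⟩
    refine mul_nonneg (by positivity) (intervalIntegral.integral_nonneg (by positivity)
      fun t _ => suppFn_nonneg n K hK h0K _)
  have hle := csInf_le ⟨0, hb⟩ ⟨z, dz, hz, rfl⟩
  have hnn := Real.sInf_nonneg hb
  simp only [hh, intervalIntegral.integral_const, smul_eq_mul, sub_zero] at hle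
  have hpi := Real.pi_pos
  have e : 1 / (2 * π) * (2 * π * (√A / π)) = √A / π := by field_simp
  rw [e] at hle
  unfold capacity
  calc _ ≤ (π * (√A / π)) ^ 2 := by gcongr
    _ = A := by
      rw [mul_div_cancel₀ _ hpi.ne', Real.sq_sqrt hA.le]

theorem test_loop (n : ℕ) (K : Set (E n))
    (hK : IsConvexBody n K) (h0K : (0 : E n) ∈ interior K) (hKs : HasSmoothBoundary n K)
    (γ : ℝ → E n) (T : ℝ) (hT : 0 < T) (hper : Function.Periodic γ T) (hC : ContDiff ℝ 1 γ)
    (hfr : ∀ t, γ t ∈ frontier K) (d : ℝ) (hd : 0 < d)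
    (hde : ∀ t, deriv γ t = d • Jl n (gradient (fun x => gauge K x ^ 2) (γ t))) :
    capacity n K ≤ d * T := by
  have hpi := Real.pi_pos
  set A := d * T with hAdef
  have hA : 0 < A := by positivity
  have hsA : 0 < √A := Real.sqrt_pos.2 hA
  set G : ℝ → E n := fun t => gradient (fun x => gauge K x ^ 2) (γ t) with hG
  have hγd : ∀ t, HasDerivAt γ (deriv γ t) t := fun t =>
    (hC.differentiable (by simp) t).hasDerivAt
  have hγ'c : Continuous (deriv γ) := hC.continuous_deriv (by simp)
  have hγc : Continuous γ := hC.continuous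
  set ω : ℝ := T / (2 * π) with hω
  have hωpos : 0 < ω := by positivity
  set q : ℝ := (√A)⁻¹ with hq
  have hqpos : 0 < q := by positivity
  let u : ℝ → E n := fun t => -(q • Jl n (γ (ω * t)))
  let du : ℝ → E n := fun t => -((q * ω) • Jl n (deriv γ (ω * t)))
  have hdu : ∀ t, du t = (q * ω * d) • G (ω * t) := by
    intro t
    simp only [du, hde, map_smul, Jl_sq, smul_smul, smul_neg, neg_neg, hG]
  have huc : Continuous u := by fun_prop
  have hduc : Continuous du := by fun_prop
  have hud : ∀ t, HasDerivAt u (du t) t := by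
    intro t
    have h1 : HasDerivAt (fun t : ℝ => ω * t) ω t := by
      simpa using (hasDerivAt_id t).const_mul ω
    have h2 := (hγd (ω * t)).scomp t h1
    have h3 := (Jl n).hasFDerivAt.comp_hasDerivAt t h2
    have h4 := (h3.const_smul q).neg
    have e5 : -(q • (Jl n) (ω • deriv γ (ω * t))) = du t := by
      simp only [du, map_smul, smul_smul]
    rw [e5] at h4
    exact h4
  set c : E n := (2 * π)⁻¹ • ∫ x in (0:ℝ)..(2 * π), u x with hcdef
  have huper : Function.Periodic u (2 * π) := by
    intro t
    have : ω * (t + 2 * π) = ω * t + T := by rw [hω]; field_simp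
    simp only [u, this, hper (ω * t)]
  refine capacity_le n K hK h0K (fun t => u t - c) du ⟨?_, ?_, ?_, ?_, ?_, ?_⟩ A hA ?_
  · intro t; simp only [huper t]
  · exact fun a b => hduc.intervalIntegrable _ _
  · intro t
    rw [intervalIntegral.integral_eq_sub_of_hasDerivAt (fun x _ => hud x)
      (hduc.intervalIntegrable _ _)]
    have e6 : ∀ a b c : E n, a - c = b - c + (a - b) := by
      intro a b c; abel
    exact e6 _ _ _
  · obtain ⟨C, hC⟩ := (isCompact_Icc (a := (0:ℝ)) (b := 2 * π)).exists_bound_of_continuousOn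
      hduc.continuousOn
    refine MemLp.of_bound hduc.aestronglyMeasurable C ?_
    filter_upwards [ae_restrict_mem measurableSet_Ioc] with x hx
    exact hC x ⟨hx.1.le, hx.2⟩
  · rw [intervalIntegral.integral_sub (huc.intervalIntegrable _ _) (by simp)]
    rw [intervalIntegral.integral_const, hcdef, smul_smul, sub_zero,
      mul_inv_cancel₀ (by positivity)]
    simp
  · have h0 : ∫ x in (0:ℝ)..(2 * π), ⟪Jl n c, du x⟫_ℝ = 0 := by
      have : ∀ x, HasDerivAt (fun x => ⟪Jl n c, u x⟫_ℝ) (⟪Jl n c, du x⟫_ℝ) x := by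
        intro x
        simpa using (hasDerivAt_const x (Jl n c)).inner ℝ (hud x)
      rw [intervalIntegral.integral_eq_sub_of_hasDerivAt (fun x _ => this x)
        (Continuous.intervalIntegrable (by fun_prop) _ _)]
      have := huper 0
      rw [zero_add] at this
      rw [this, sub_self]
    simp only [Jl_apply, map_sub, inner_sub_left]
    rw [intervalIntegral.integral_sub, h0, sub_zero]
    · have : ∀ x, ⟪Jl n (u x), du x⟫_ℝ = 2 * (q ^ 2 * ω * d) := by
        intro x
        rw [hdu]
        simp only [u, map_neg, map_smul, Jl_sq, smul_neg, neg_neg, inner_smul_left,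
          inner_smul_right, hG, (grad_facts n K hK h0K hKs _ (hfr (ω * x))).1]
        simp
        ring
      simp only [this, intervalIntegral.integral_const, smul_eq_mul, sub_zero]
      have hq2 : q ^ 2 = A⁻¹ := by rw [hq, inv_pow, Real.sq_sqrt hA.le]
      rw [hq2, hω, hAdef]
      field_simp
    all_goals exact Continuous.intervalIntegrable (by fun_prop) _ _
  · intro t
    rw [hdu, hG, suppFn_eq n K hK h0K hKs _ (hfr _) _ (by positivity)]
    have hs : √A * √A = d * T := Real.mul_self_sqrt hA.le
    rw [hω, hq]
    field_simp
    nlinarith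

/-- For any capacity carrier `γ` of `K`, `4π·c(K) ≤ (Euclidean length of γ)²`. -/
theorem four_pi_capacity_le_euclidean_length_sq (n : ℕ) (K : Set (E n))
    (hK : IsConvexBody n K) (h0K : (0 : E n) ∈ interior K) (hKs : HasSmoothBoundary n K)
    (γ : ℝ → E n) (T₀ : ℝ) (hγ : IsCapacityCarrier n K γ T₀) :
    4 * π * capacity n K ≤ (∫ t in (0:ℝ)..T₀, ‖deriv γ t‖) ^ 2 := by
  obtain ⟨⟨hT, hper, hC, -, hfr, d, hd, hde⟩, -⟩ := hγ
  simp only [Jl_apply] at hde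
  have hcap := test_loop n K hK h0K hKs γ T₀ hT hper hC hfr d hd hde
  have hγd : ∀ t, HasDerivAt γ (deriv γ t) t := fun t =>
    (hC.differentiable (by simp) t).hasDerivAt
  have hin : ∀ t, ⟪Jl n (γ t), deriv γ t⟫_ℝ = 2 * d := by
    intro t
    rw [hde, inner_smul_right, Jl_inner, (grad_facts n K hK h0K hKs _ (hfr t)).1]
    ring
  have hiso := iso n γ (deriv γ) T₀ hT hγd (hC.continuous_deriv (by simp))
    (fun t => by
      have : (fun x => γ (x + T₀)) = γ := funext hper
      rw [← deriv_comp_add_const, this])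
    (by have := hper 0; rw [zero_add] at this; exact this.symm)
    (fun t h => by have := hin t; rw [h, inner_zero_right] at this; linarith)
  simp only [hin, intervalIntegral.integral_const, smul_eq_mul, sub_zero] at hiso
  have hpi := Real.pi_pos
  calc _ ≤ 4 * π * (d * T₀) := by gcongr
    _ = 2 * π * (T₀ * (2 * d)) := by ring
    _ ≤ _ := hiso
end
end

section
/- Let K, T ⊂ ℝ^{2n} be convex bodies. Then the limit d_T(K) := lim_{ε→0⁺} (c(K+εT) − c(K))/ε exists (is finite), and d_T(K) ≥ 2·c(K)^{1/2}·c(T)^{1/2}. -/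
open MeasureTheory Real Set Filter intervalIntegral Metric
open scoped InnerProductSpace Topology Pointwise

noncomputable section

lemma aux_deriv {ι : Type*} (a b : ι → ℝ) (C : ℝ) (ha : ∀ i, 0 ≤ a i) (hb : ∀ i, 0 ≤ b i)
    (hab : ∀ i, b i ≤ C * a i) :
    ∃ L : ℝ, Tendsto (fun ε : ℝ => ((π * ⨅ i, (a i + ε * b i)) ^ 2 - (π * ⨅ i, a i) ^ 2) / ε)
        (𝓝[>] (0:ℝ)) (𝓝 L) ∧
      2 * (π * ⨅ i, a i) * (π * ⨅ i, b i) ≤ L := by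
  rcases isEmpty_or_nonempty ι with hι | hι
  · refine ⟨0, ?_, ?_⟩
    · simp
    · simp
  have bda : BddBelow (range a) := ⟨0, by rintro _ ⟨i, rfl⟩; exact ha i⟩
  have bdb : BddBelow (range b) := ⟨0, by rintro _ ⟨i, rfl⟩; exact hb i⟩
  have bdf : ∀ ε : ℝ, 0 < ε → BddBelow (range fun i => a i + ε * b i) := fun ε hε =>
    ⟨0, by rintro _ ⟨i, rfl⟩; have := ha i; have := hb i; positivity⟩
  set f0 := ⨅ i, a i with hf0
  set g := ⨅ i, b i with hg
  set f : ℝ → ℝ := fun ε => ⨅ i, (a i + ε * b i) with hf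
  have f0n : 0 ≤ f0 := Real.iInf_nonneg ha
  have gn : 0 ≤ g := Real.iInf_nonneg hb
  have hfle : ∀ ε : ℝ, 0 < ε → ∀ i, f ε ≤ a i + ε * b i := fun ε hε i => ciInf_le (bdf ε hε) i
  have hf0le : ∀ i, f0 ≤ a i := fun i => ciInf_le bda i
  have hgle : ∀ i, g ≤ b i := fun i => ciInf_le bdb i
  set q : ℝ → ℝ := fun ε => (f ε - f0) / ε with hq
  have qlow : ∀ ε : ℝ, 0 < ε → g ≤ q ε := by
    intro ε hε
    rw [hq]; dsimp only
    rw [le_div_iff₀ hε]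
    have : f0 + ε * g ≤ f ε := le_ciInf fun i => by
      have := hf0le i
      have := mul_le_mul_of_nonneg_left (hgle i) hε.le
      linarith
    linarith
  have qup : ∀ ε : ℝ, 0 < ε → q ε ≤ C * f0 := by
    intro ε hε
    rw [hq]; dsimp only
    rw [div_le_iff₀ hε]
    have hC : 0 ≤ 1 + ε * C ∨ 1 + ε * C < 0 := le_or_gt _ _
    have key : ∀ i, f ε ≤ (1 + ε * C) * a i := fun i => by
      have := hfle ε hε i
      have := mul_le_mul_of_nonneg_left (hab i) hε.le
      linarith
    rcases hC with hC | hC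
    · have : f ε ≤ (1 + ε * C) * f0 := by
        rw [hf0, Real.mul_iInf_of_nonneg hC]
        exact le_ciInf key
      linarith
    · have hz : ∀ i, a i = 0 := fun i => by
        have h1 := hfle ε hε i
        have h2 := ha i
        have h3 := hb i
        have h4 := hab i
        have hCn : C < 0 := by nlinarith
        nlinarith
      have : f0 = 0 := by simp [hf0, hz]
      obtain ⟨i⟩ := hι
      have := key i
      rw [hz i] at this
      simp_all
  have qanti : AntitoneOn q (Ioi 0) := by
    intro s hs t ht hst
    have hs' : 0 < s := hs
    have ht' : 0 < t := ht
    rw [hq]; dsimp only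
    rw [div_le_div_iff₀ ht' hs']
    have : (1 - s / t) * f0 + s / t * f t ≤ f s := le_ciInf fun i => by
      have h1 : 0 ≤ s / t := by positivity
      have h2 : 0 ≤ 1 - s / t := by
        rw [sub_nonneg, div_le_one ht']; exact hst
      have e1 := mul_le_mul_of_nonneg_left (hf0le i) h2
      have e2 := mul_le_mul_of_nonneg_left (hfle t ht' i) h1
      have e3 : s / t * (a i + t * b i) = s / t * a i + s * b i := by field_simp
      linarith
    have h := mul_le_mul_of_nonneg_left this ht'.le
    have e : t * ((1 - s / t) * f0 + s / t * f t) = (t - s) * f0 + s * f t := by field_simp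
    linarith
  have bq : BddAbove (q '' Ioi 0) := ⟨C * f0, by rintro _ ⟨ε, hε, rfl⟩; exact qup ε hε⟩
  set M := sSup (q '' Ioi 0) with hM
  have qlim : Tendsto q (𝓝[>] 0) (𝓝 M) := by
    exact qanti.tendsto_nhdsGT bq
  have gM : g ≤ M := (qlow 1 one_pos).trans (le_csSup bq ⟨1, by simp, rfl⟩)
  refine ⟨π ^ 2 * (M * (2 * f0 + 0 * M)), ?_, ?_⟩
  · have hid : Tendsto (fun ε : ℝ => ε) (𝓝[>] (0:ℝ)) (𝓝 0) := tendsto_id.mono_left nhdsWithin_le_nhds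
    have := (qlim.mul ((tendsto_const_nhds (x := 2 * f0)).add (hid.mul qlim))).const_mul (π ^ 2)
    refine this.congr' ?_
    filter_upwards [self_mem_nhdsWithin] with ε hε
    have hε' : ε ≠ 0 := ne_of_gt hε
    rw [hq]; dsimp only
    field_simp
    ring
  · have : f0 * g ≤ f0 * M := mul_le_mul_of_nonneg_left gM f0n
    have := mul_le_mul_of_nonneg_left this (sq_nonneg π)
    nlinarith

lemma supp_bdd {n : ℕ} {K : Set (E n)} (hK : IsCompact K) (u : E n) :
    BddAbove ((fun x => ⟪x, u⟫_ℝ) '' K) :=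
  (hK.image (by fun_prop)).bddAbove

lemma le_supp {n : ℕ} {K : Set (E n)} (hK : IsCompact K) {x : E n} (hx : x ∈ K) (u : E n) :
    ⟪x, u⟫_ℝ ≤ suppFn n K u := le_csSup (supp_bdd hK u) ⟨x, hx, rfl⟩

lemma supp_add_smul {n : ℕ} {K T : Set (E n)} (hK : IsCompact K) (hT : IsCompact T)
    (hKn : K.Nonempty) (hTn : T.Nonempty) {ε : ℝ} (hε : 0 < ε) (u : E n) :
    suppFn n (K + ε • T) u = suppFn n K u + ε * suppFn n T u := by
  apply le_antisymm
  · refine csSup_le ((hKn.add (hTn.smul_set)).image _) ?_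
    rintro _ ⟨_, ⟨x, hx, _, ⟨y, hy, rfl⟩, rfl⟩, rfl⟩
    simp only [inner_add_left, real_inner_smul_left]
    have := le_supp hK hx u
    have := mul_le_mul_of_nonneg_left (le_supp hT hy u) hε.le
    linarith
  · obtain ⟨x, hx, hx'⟩ := hK.exists_sSup_image_eq hKn (f := fun x => ⟪x, u⟫_ℝ) (by fun_prop)
    obtain ⟨y, hy, hy'⟩ := hT.exists_sSup_image_eq hTn (f := fun x => ⟪x, u⟫_ℝ) (by fun_prop)
    have : ⟪x + ε • y, u⟫_ℝ ≤ suppFn n (K + ε • T) u :=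
      le_supp (hK.add (hT.smul ε)) (add_mem_add hx (smul_mem_smul_set hy)) u
    rw [inner_add_left, real_inner_smul_left] at this
    unfold suppFn at *
    rw [hx', hy']
    exact this

lemma supp_le_norm {n : ℕ} {K : Set (E n)} (hKn : K.Nonempty) {R : ℝ}
    (hR : ∀ x ∈ K, ‖x‖ ≤ R) (u : E n) : suppFn n K u ≤ R * ‖u‖ := by
  refine csSup_le (hKn.image _) ?_
  rintro _ ⟨x, hx, rfl⟩
  exact (real_inner_le_norm _ _).trans (mul_le_mul_of_nonneg_right (hR x hx) (norm_nonneg _))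

lemma supp_sub {n : ℕ} {K : Set (E n)} (hK : IsCompact K) (hKn : K.Nonempty) {R : ℝ}
    (hR : ∀ x ∈ K, ‖x‖ ≤ R) (u v : E n) : suppFn n K u ≤ suppFn n K v + R * ‖u - v‖ := by
  refine csSup_le (hKn.image _) ?_
  rintro _ ⟨x, hx, rfl⟩
  have h1 := le_supp hK hx v
  have h2 : ⟪x, u - v⟫_ℝ ≤ R * ‖u - v‖ :=
    (real_inner_le_norm _ _).trans (mul_le_mul_of_nonneg_right (hR x hx) (norm_nonneg _))
  rw [inner_sub_right] at h2
  dsimp only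
  linarith

lemma supp_lip {n : ℕ} {K : Set (E n)} (hK : IsCompact K) (hKn : K.Nonempty) {R : ℝ} (hR0 : 0 ≤ R)
    (hR : ∀ x ∈ K, ‖x‖ ≤ R) : LipschitzWith ⟨R, hR0⟩ (suppFn n K) := by
  apply LipschitzWith.of_le_add_mul
  intro u v
  rw [dist_eq_norm]
  exact supp_sub hK hKn hR u v

lemma exists_R {n : ℕ} {K : Set (E n)} (hK : IsCompact K) : ∃ R : ℝ, 0 ≤ R ∧ ∀ x ∈ K, ‖x‖ ≤ R := by
  obtain ⟨R, hR⟩ := hK.isBounded.exists_norm_le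
  exact ⟨max R 0, le_max_right _ _, fun x hx => (hR x hx).trans (le_max_left _ _)⟩

lemma supp_zero {n : ℕ} {K : Set (E n)} (hKn : K.Nonempty) : suppFn n K 0 = 0 := by
  simp [suppFn, hKn]

lemma supp_int {n : ℕ} {K : Set (E n)} (hK : IsCompact K) (hKn : K.Nonempty) {dz : ℝ → E n}
    {a b : ℝ} (h : IntervalIntegrable dz volume a b) :
    IntervalIntegrable (fun t => suppFn n K (dz t)) volume a b := by
  obtain ⟨R, hR0, hR⟩ := exists_R hK
  have hl := supp_lip hK hKn hR0 hR
  refine (h.norm.const_mul R).mono_fun ?_ ?_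
  · exact hl.continuous.comp_aestronglyMeasurable h.aestronglyMeasurable_restrict_uIoc
  · refine Eventually.of_forall fun t => ?_
    have := hl.norm_sub_le (dz t) 0
    rw [supp_zero hKn, sub_zero, sub_zero] at this
    refine this.trans ?_
    exact le_abs_self _

lemma int_inner_zero {n : ℕ} {z dz : ℝ → E n} (h : InE n 2 z dz) (x : E n) :
    ∫ t in (0:ℝ)..(2 * π), ⟪x, dz t⟫_ℝ = 0 := by
  obtain ⟨hp, hi, hz, -⟩ := h
  have h0 : ∫ t in (0:ℝ)..(2 * π), dz t = 0 := by
    have h1 := hz (2 * π)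
    have h2 := hp 0
    rw [zero_add] at h2
    rw [h2] at h1
    simpa using h1
  have := (innerSL ℝ x).intervalIntegral_comp_comm (hi 0 (2 * π))
  rw [h0, map_zero] at this
  simpa using this

lemma supp_int_nonneg {n : ℕ} {K : Set (E n)} (hK : IsCompact K) (hKn : K.Nonempty)
    {z dz : ℝ → E n} (h : InE n 2 z dz) : 0 ≤ ∫ t in (0:ℝ)..(2 * π), suppFn n K (dz t) := by
  obtain ⟨x, hx⟩ := hKn
  refine (int_inner_zero h x).symm.le.trans ?_
  have hi := h.2.1 0 (2 * π)
  refine integral_mono_on (by positivity) ?_ (supp_int hK ⟨x, hx⟩ hi) fun t _ => le_supp hK hx _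
  exact ⟨hi.1.const_inner x, hi.2.const_inner x⟩

lemma supp_compare {n : ℕ} {K T : Set (E n)} (hK : IsConvexBody n K) (hT : IsConvexBody n T) :
    ∃ C : ℝ, ∀ z dz : ℝ → E n, InE n 2 z dz →
      ∫ t in (0:ℝ)..(2 * π), suppFn n T (dz t) ≤ C * ∫ t in (0:ℝ)..(2 * π), suppFn n K (dz t) := by
  obtain ⟨hKc, -, x, hx⟩ := hK
  obtain ⟨hTc, -, hTi⟩ := hT
  have hTn := hTi.mono interior_subset
  have hKn : K.Nonempty := ⟨x, interior_subset hx⟩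
  obtain ⟨R, hR0, hR⟩ := exists_R hTc
  obtain ⟨r, hr, hball⟩ := Metric.nhds_basis_closedBall.mem_iff.1 (mem_interior_iff_mem_nhds.1 hx)
  have hKlow : ∀ u, ⟪x, u⟫_ℝ + r * ‖u‖ ≤ suppFn n K u := by
    intro u
    by_cases hu : u = 0
    · simp [hu, supp_zero hKn]
    have hu' : ‖u‖ ≠ 0 := norm_ne_zero_iff.2 hu
    have hm : x + (r / ‖u‖) • u ∈ K := by
      apply hball
      rw [mem_closedBall, dist_eq_norm, add_sub_cancel_left, norm_smul, Real.norm_eq_abs,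
        abs_of_nonneg (by positivity)]
      rw [div_mul_cancel₀ _ hu']
    have := le_supp hKc hm u
    rw [inner_add_left, real_inner_smul_left, real_inner_self_eq_norm_sq] at this
    have e : r / ‖u‖ * ‖u‖ ^ 2 = r * ‖u‖ := by field_simp
    linarith
  refine ⟨R / r, fun z dz h => ?_⟩
  have hi := h.2.1 0 (2 * π)
  have hii : IntervalIntegrable (fun t => ⟪x, dz t⟫_ℝ) volume 0 (2 * π) :=
    ⟨hi.1.const_inner x, hi.2.const_inner x⟩
  have h1 : ∫ t in (0:ℝ)..(2 * π), suppFn n T (dz t) ≤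
      ∫ t in (0:ℝ)..(2 * π), R / r * (suppFn n K (dz t) - ⟪x, dz t⟫_ℝ) := by
    refine integral_mono_on (by positivity) (supp_int hTc hTn hi)
      (((supp_int hKc hKn hi).sub hii).const_mul _) fun t _ => ?_
    refine (supp_le_norm hTn hR _).trans ?_
    have e : R * ‖dz t‖ = R / r * (r * ‖dz t‖) := by field_simp
    rw [e]
    refine mul_le_mul_of_nonneg_left ?_ (by positivity)
    linarith [hKlow (dz t)]
  rwa [intervalIntegral.integral_const_mul, intervalIntegral.integral_sub (supp_int hKc hKn hi) hii,
    int_inner_zero h x, sub_zero] at h1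

lemma capacity_eq (n : ℕ) (S : Set (E n)) :
    capacity n S = (π * ⨅ p : {p : (ℝ → E n) × (ℝ → E n) // InE n 2 p.1 p.2},
      (1 / (2 * π)) * ∫ t in (0:ℝ)..(2 * π), suppFn n S (p.1.2 t)) ^ 2 := by
  unfold capacity iInf
  congr 3
  ext r
  constructor
  · rintro ⟨z, dz, h, rfl⟩
    exact ⟨⟨(z, dz), h⟩, rfl⟩
  · rintro ⟨⟨⟨z, dz⟩, h⟩, rfl⟩
    exact ⟨z, dz, h, rfl⟩

/-- The derivative `d_T(K) = lim_{ε→0⁺} (c(K+εT) − c(K))/ε` exists and satisfies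
`d_T(K) ≥ 2·c(K)^{1/2}·c(T)^{1/2}`. -/
theorem capacity_derivative_exists_and_lower_bound (n : ℕ) (K T : Set (E n))
    (hK : IsConvexBody n K) (hT : IsConvexBody n T) :
    ∃ L : ℝ,
      Tendsto (fun ε : ℝ => (capacity n (K + ε • T) - capacity n K) / ε)
        (𝓝[>] (0:ℝ)) (𝓝 L) ∧
      2 * Real.sqrt (capacity n K) * Real.sqrt (capacity n T) ≤ L := by
  have hKn : K.Nonempty := hK.2.2.mono interior_subset
  have hTn : T.Nonempty := hT.2.2.mono interior_subset
  obtain ⟨C, hC⟩ := supp_compare hK hT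
  have hpi : (0:ℝ) ≤ 1 / (2 * π) := by positivity
  have han := fun p : {p : (ℝ → E n) × (ℝ → E n) // InE n 2 p.1 p.2} =>
    mul_nonneg hpi (supp_int_nonneg hK.1 hKn p.2)
  have hbn := fun p : {p : (ℝ → E n) × (ℝ → E n) // InE n 2 p.1 p.2} =>
    mul_nonneg hpi (supp_int_nonneg hT.1 hTn p.2)
  obtain ⟨L, hL, hL'⟩ := aux_deriv
    (fun p : {p : (ℝ → E n) × (ℝ → E n) // InE n 2 p.1 p.2} =>
      (1 / (2 * π)) * ∫ t in (0:ℝ)..(2 * π), suppFn n K (p.1.2 t))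
    (fun p => (1 / (2 * π)) * ∫ t in (0:ℝ)..(2 * π), suppFn n T (p.1.2 t)) C
    han hbn
    (fun p => by
      have := mul_le_mul_of_nonneg_left (hC _ _ p.2) hpi
      linarith)
  refine ⟨L, hL.congr' ?_, ?_⟩
  · filter_upwards [self_mem_nhdsWithin] with ε hε
    rw [capacity_eq, capacity_eq]
    congr 5
    funext p
    have hi := p.2.2.1 0 (2 * π)
    simp_rw [supp_add_smul hK.1 hT.1 hKn hTn hε]
    rw [intervalIntegral.integral_add (supp_int hK.1 hKn hi)
      ((supp_int hT.1 hTn hi).const_mul _), intervalIntegral.integral_const_mul]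
    ring
  · rw [capacity_eq, capacity_eq,
      Real.sqrt_sq (mul_nonneg pi_pos.le (Real.iInf_nonneg han)),
      Real.sqrt_sq (mul_nonneg pi_pos.le (Real.iInf_nonneg hbn))]
    exact hL'
end
end

section
/- Let K, T ⊂ ℝ^{2n} be convex bodies. Then the function ε ↦ (c(K+εT)^{1/2} − c(K)^{1/2})/ε is nonincreasing on (0,∞); moreover, if 0 lies in the interior of K and R > 0 satisfies T ⊆ R·K, then this function is bounded above by R·c(K)^{1/2}. -/
open MeasureTheory Real Set Filter intervalIntegral Metric
open scoped InnerProductSpace Topology Pointwise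

noncomputable section

lemma aux_bdd (n : ℕ) {K : Set (E n)} (hK : IsCompact K) (u : E n) :
    BddAbove ((fun x => ⟪x, u⟫_ℝ) '' K) :=
  (hK.image (by fun_prop)).bddAbove

lemma aux_inner_le (n : ℕ) {K : Set (E n)} (hK : IsCompact K) {x : E n} (hx : x ∈ K) (u : E n) :
    ⟪x, u⟫_ℝ ≤ suppFn n K u :=
  le_csSup (aux_bdd n hK u) ⟨x, hx, rfl⟩

lemma aux_le (n : ℕ) {K : Set (E n)} (hne : K.Nonempty) (u : E n) {c : ℝ}
    (h : ∀ x ∈ K, ⟪x, u⟫_ℝ ≤ c) : suppFn n K u ≤ c := by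
  apply csSup_le (hne.image _)
  rintro _ ⟨x, hx, rfl⟩
  exact h x hx

lemma aux_lip (n : ℕ) {K : Set (E n)} (hK : IsCompact K) (hne : K.Nonempty) :
    ∃ C : NNReal, LipschitzWith C (suppFn n K) := by
  obtain ⟨M, hM⟩ := hK.isBounded.exists_norm_le
  refine ⟨M.toNNReal, LipschitzWith.of_le_add_mul' M ?_⟩
  intro u v
  apply aux_le n hne
  intro x hx
  have h1 := aux_inner_le n hK hx v
  have h2 : ⟪x, u - v⟫_ℝ ≤ ‖x‖ * ‖u - v‖ := real_inner_le_norm _ _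
  have h3 : ‖x‖ * ‖u - v‖ ≤ M * ‖u - v‖ :=
    mul_le_mul_of_nonneg_right (hM x hx) (norm_nonneg _)
  rw [inner_sub_right] at h2
  rw [dist_eq_norm]
  linarith

lemma aux_integrable (n : ℕ) {K : Set (E n)} (hK : IsCompact K) (hne : K.Nonempty)
    {f : ℝ → E n} {a b : ℝ} (hf : IntervalIntegrable f volume a b) :
    IntervalIntegrable (fun t => suppFn n K (f t)) volume a b := by
  obtain ⟨C, hC⟩ := aux_lip n hK hne
  have h0 : suppFn n K 0 = 0 := by
    unfold suppFn
    simp [hne.image_const]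
  constructor
  · exact (hC.comp_memLp h0 (memLp_one_iff_integrable.2 hf.1)).integrable le_rfl
  · exact (hC.comp_memLp h0 (memLp_one_iff_integrable.2 hf.2)).integrable le_rfl

lemma aux_add (n : ℕ) {K T : Set (E n)} (hK : IsCompact K) (hneK : K.Nonempty)
    (hT : IsCompact T) (hneT : T.Nonempty) {ε : ℝ} (hε : 0 < ε) (u : E n) :
    suppFn n (K + ε • T) u = suppFn n K u + ε * suppFn n T u := by
  have hc : IsCompact (K + ε • T) := hK.add (hT.smul ε)
  apply le_antisymm
  · apply aux_le n (hneK.add (hneT.smul_set))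
    rintro _ ⟨x, hx, _, ⟨y, hy, rfl⟩, rfl⟩
    have h1 := aux_inner_le n hK hx u
    have h2 := mul_le_mul_of_nonneg_left (aux_inner_le n hT hy u) hε.le
    simp only [inner_add_left, real_inner_smul_left]
    linarith
  · have key : ∀ y ∈ T, suppFn n K u ≤ suppFn n (K + ε • T) u - ε * ⟪y, u⟫_ℝ := by
      intro y hy
      apply aux_le n hneK
      intro x hx
      have := aux_inner_le n hc (Set.add_mem_add hx (Set.smul_mem_smul_set (a := ε) hy)) u
      simp only [inner_add_left, real_inner_smul_left] at this
      linarith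
    have : suppFn n T u ≤ (suppFn n (K + ε • T) u - suppFn n K u) / ε := by
      apply aux_le n hneT
      intro y hy
      rw [le_div_iff₀ hε]
      linarith [key y hy]
    rw [le_div_iff₀ hε] at this
    linarith

lemma aux_nonneg (n : ℕ) {K : Set (E n)} (hK : IsCompact K) (hne : K.Nonempty)
    {z dz : ℝ → E n} (h : InE n 2 z dz) :
    0 ≤ ∫ t in (0:ℝ)..(2 * π), suppFn n K (dz t) := by
  obtain ⟨hp, hi, hz, -⟩ := h
  have hint : ∫ s in (0:ℝ)..(2 * π), dz s = 0 := by
    have h1 := hz (2 * π)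
    have h2 : z (2 * π) = z 0 := by simpa using hp 0
    rw [h2] at h1
    simpa using h1
  obtain ⟨x, hx⟩ := hne
  have h3 : ∫ t in (0:ℝ)..(2 * π), ⟪x, dz t⟫_ℝ = 0 := by
    have := (innerSL ℝ x).intervalIntegral_comp_comm (hi 0 (2 * π))
    simp only [innerSL_apply_apply] at this
    rw [this, hint, inner_zero_right]
  refine h3.symm.le.trans ?_
  apply intervalIntegral.integral_mono_on (by positivity)
  · have := hi 0 (2 * π)
    exact ⟨this.1.const_inner x, this.2.const_inner x⟩
  · exact aux_integrable n hK ⟨x, hx⟩ (hi _ _)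
  · intro t _
    exact aux_inner_le n hK hx _

/-- The set whose infimum defines the capacity. -/
def auxSet (n : ℕ) (S : Set (E n)) : Set ℝ :=
  { r : ℝ | ∃ z dz : ℝ → E n, InE n 2 z dz ∧
      r = (1 / (2 * π)) * ∫ t in (0:ℝ)..(2 * π), suppFn n S (dz t) }

lemma auxSet_nonneg (n : ℕ) {K : Set (E n)} (hK : IsCompact K) (hne : K.Nonempty) :
    ∀ r ∈ auxSet n K, 0 ≤ r := by
  rintro r ⟨z, dz, h, rfl⟩
  exact mul_nonneg (by positivity) (aux_nonneg n hK hne h)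

lemma aux_sqrt (n : ℕ) {K : Set (E n)} (hK : IsCompact K) (hne : K.Nonempty) :
    Real.sqrt (capacity n K) = π * sInf (auxSet n K) :=
  Real.sqrt_sq (mul_nonneg pi_pos.le (Real.sInf_nonneg (auxSet_nonneg n hK hne)))

lemma aux_inf_le (n : ℕ) {K : Set (E n)} (hK : IsCompact K) (hne : K.Nonempty)
    {z dz : ℝ → E n} (h : InE n 2 z dz) :
    sInf (auxSet n K) ≤ (1 / (2 * π)) * ∫ t in (0:ℝ)..(2 * π), suppFn n K (dz t) :=
  csInf_le ⟨0, auxSet_nonneg n hK hne⟩ ⟨z, dz, h, rfl⟩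

lemma aux_le_inf (n : ℕ) {K : Set (E n)} (hz : ∃ z dz : ℝ → E n, InE n 2 z dz) {c : ℝ}
    (h : ∀ z dz : ℝ → E n, InE n 2 z dz →
      c ≤ (1 / (2 * π)) * ∫ t in (0:ℝ)..(2 * π), suppFn n K (dz t)) :
    c ≤ sInf (auxSet n K) := by
  obtain ⟨z, dz, hz⟩ := hz
  have hne : (auxSet n K).Nonempty := ⟨_, z, dz, hz, rfl⟩
  apply le_csInf hne
  rintro _ ⟨z, dz, hz, rfl⟩
  exact h z dz hz

lemma aux_int_add (n : ℕ) {K T : Set (E n)} (hK : IsCompact K) (hneK : K.Nonempty)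
    (hT : IsCompact T) (hneT : T.Nonempty) {ε : ℝ} (hε : 0 < ε)
    {z dz : ℝ → E n} (h : InE n 2 z dz) :
    ∫ t in (0:ℝ)..(2 * π), suppFn n (K + ε • T) (dz t) =
      (∫ t in (0:ℝ)..(2 * π), suppFn n K (dz t)) +
        ε * ∫ t in (0:ℝ)..(2 * π), suppFn n T (dz t) := by
  simp only [aux_add n hK hneK hT hneT hε]
  rw [intervalIntegral.integral_add (aux_integrable n hK hneK (h.2.1 _ _))
    ((aux_integrable n hT hneT (h.2.1 _ _)).const_mul ε), intervalIntegral.integral_const_mul]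

/-- The difference quotient `ε ↦ (c(K+εT)^{1/2} − c(K)^{1/2})/ε` is nonincreasing on
`(0,∞)`; moreover if `0 ∈ int K` and `T ⊆ R·K` then it is bounded above by `R·c(K)^{1/2}`. -/
theorem difference_quotient_antitone_and_bounded (n : ℕ) (K T : Set (E n))
    (hK : IsConvexBody n K) (hT : IsConvexBody n T) :
    AntitoneOn (fun ε : ℝ =>
        (Real.sqrt (capacity n (K + ε • T)) - Real.sqrt (capacity n K)) / ε)
      (Set.Ioi (0:ℝ)) ∧
    ((0 : E n) ∈ interior K → ∀ R : ℝ, 0 < R → T ⊆ R • K → ∀ ε : ℝ, 0 < ε →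
      (Real.sqrt (capacity n (K + ε • T)) - Real.sqrt (capacity n K)) / ε ≤
        R * Real.sqrt (capacity n K)) := by
  obtain ⟨hKc, -, hKi⟩ := hK
  obtain ⟨hTc, -, hTi⟩ := hT
  have hneK : K.Nonempty := hKi.mono interior_subset
  have hneT : T.Nonempty := hTi.mono interior_subset
  have hc : ∀ ε : ℝ, IsCompact (K + ε • T) := fun ε => hKc.add (hTc.smul ε)
  have hne : ∀ ε : ℝ, (K + ε • T).Nonempty := fun ε => hneK.add hneT.smul_set
  have hs : ∀ ε : ℝ, Real.sqrt (capacity n (K + ε • T)) = π * sInf (auxSet n (K + ε • T)) :=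
    fun ε => aux_sqrt n (hc ε) (hne ε)
  simp only [hs, aux_sqrt n hKc hneK]
  by_cases hz : ∃ z dz : ℝ → E n, InE n 2 z dz
  swap
  · have h0 : ∀ S, sInf (auxSet n S) = 0 := by
      intro S
      have : auxSet n S = ∅ := by
        ext r
        simp only [Set.mem_empty_iff_false, iff_false]
        rintro ⟨z, dz, h, -⟩
        exact hz ⟨z, dz, h⟩
      rw [this, Real.sInf_empty]
    simp only [h0]
    simp [AntitoneOn]
  constructor
  · intro a ha b hb hab
    have ha' : 0 < a := ha
    have hb' : 0 < b := hb
    simp only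
    rw [div_le_div_iff₀ hb' ha']
    have key : (a * sInf (auxSet n (K + b • T)) + (b - a) * sInf (auxSet n K)) / b ≤
        sInf (auxSet n (K + a • T)) := by
      apply aux_le_inf n hz
      intro z dz h
      have h1 := mul_le_mul_of_nonneg_left (aux_inf_le n (hc b) (hne b) h) ha'.le
      have h2 := mul_le_mul_of_nonneg_left (aux_inf_le n hKc hneK h) (sub_nonneg.2 hab)
      rw [aux_int_add n hKc hneK hTc hneT hb' h] at h1
      rw [aux_int_add n hKc hneK hTc hneT ha' h, div_le_iff₀ hb']
      linarith
    rw [div_le_iff₀ hb'] at key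
    have := mul_le_mul_of_nonneg_left key pi_pos.le
    linarith
  · intro _ R hR hTR ε hε
    rw [div_le_iff₀ hε]
    have hle : ∀ u, suppFn n T u ≤ R * suppFn n K u := by
      intro u
      apply aux_le n hneT
      intro y hy
      obtain ⟨x, hx, rfl⟩ := hTR hy
      simp only [real_inner_smul_left]
      exact mul_le_mul_of_nonneg_left (aux_inner_le n hKc hx u) hR.le
    have hpos : 0 < 1 + ε * R := by positivity
    have key : sInf (auxSet n (K + ε • T)) / (1 + ε * R) ≤ sInf (auxSet n K) := by
      apply aux_le_inf n hz
      intro z dz h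
      rw [div_le_iff₀ hpos]
      refine (aux_inf_le n (hc ε) (hne ε) h).trans ?_
      rw [aux_int_add n hKc hneK hTc hneT hε h, mul_assoc]
      apply mul_le_mul_of_nonneg_left _ (by positivity)
      have h3 : ∫ t in (0:ℝ)..(2 * π), suppFn n T (dz t) ≤
          R * ∫ t in (0:ℝ)..(2 * π), suppFn n K (dz t) := by
        rw [← intervalIntegral.integral_const_mul]
        apply intervalIntegral.integral_mono_on (by positivity)
          (aux_integrable n hTc hneT (h.2.1 _ _))
          ((aux_integrable n hKc hneK (h.2.1 _ _)).const_mul R)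
        intro t _
        exact hle _
      have := mul_le_mul_of_nonneg_left h3 hε.le
      linarith
    rw [div_le_iff₀ hpos] at key
    have := mul_le_mul_of_nonneg_left key pi_pos.le
    linarith
end
end
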